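/- Let P be a finite pure weighted graded poset of rank d with a standard weight scheme, in which every element of positive rank covers at least two elements, and suppose P possesses Property AL. Then for every 0 ≤ l ≤ d−1 and every f ∈ C^l: ⟨A_l f, f⟩ = Σ_{s∈P(l−1)} m(s)·⟨A_s f_s, f_s⟩_s, where A_s is the 0-th adjacency operator of the link P_s and f_s the localization of f to P_s. -/

import Mathlib

open Finset

attribute [local instance] Classical.propDecidable

noncomputable section

/-- A finite pure weighted graded poset of rank `d`, presented as a rank function
and a weight scheme on a finite partial order `P`. -/
structure WGP (P : Type) [Fintype P] [PartialOrder P] where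
  /-- the rank of the poset -/
  d : ℤ
  /-- the rank function -/
  rk : P → ℤ
  rk_mono : Monotone rk
  rk_lb : ∀ x, -1 ≤ rk x
  rk_ub : ∀ x, rk x ≤ d
  rk_covBy : ∀ a b : P, a ⋖ b → rk b = rk a + 1
  bot_unique : ∃! x : P, rk x = -1
  isPure : ∀ x : P, ∃ y : P, rk y = d ∧ x ≤ y
  /-- the weight function -/
  m : P → ℝ
  m_pos : ∀ x, 0 < m x
  /-- the transition probabilities: `p y x` is `p_{y → x}` -/
  p : P → P → ℝ
  p_nonneg : ∀ y x, 0 ≤ p y x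
  p_pos_iff : ∀ y x, 0 < p y x ↔ x ⋖ y
  p_sum : ∀ y, 0 ≤ rk y → ∑ x ∈ univ.filter (fun x => x ⋖ y), p y x = 1
  m_eq : ∀ x, rk x < d → m x = ∑ y ∈ univ.filter (fun y => x ⋖ y), p y x * m y
  m_bot : ∀ x, rk x = -1 → m x = 1

/-- `T` has at most `n` eigenvalues greater than `c`, counted with
(geometric) multiplicity. -/
def eigMultAboveLe {V : Type*} [AddCommGroup V] [Module ℝ V]
    (T : Module.End ℝ V) (c : ℝ) (n : ℕ) : Prop :=
  ∀ s : Finset ℝ, (∀ μ ∈ s, c < μ) →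
    ∑ μ ∈ s, Module.finrank ℝ (T.eigenspace μ) ≤ n

/-- `μ` is the second largest eigenvalue of `T`, counted with multiplicity. -/
def IsSecondLargestEig {V : Type*} [AddCommGroup V] [Module ℝ V]
    (T : Module.End ℝ V) (μ : ℝ) : Prop :=
  T.HasEigenvalue μ ∧ eigMultAboveLe T μ 1 ∧
    ∃ s : Finset ℝ, (∀ ν ∈ s, μ ≤ ν) ∧
      2 ≤ ∑ ν ∈ s, Module.finrank ℝ (T.eigenspace ν)

/-- `ν` is the least eigenvalue of `T`. -/
def IsLeastEig {V : Type*} [AddCommGroup V] [Module ℝ V]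
    (T : Module.End ℝ V) (ν : ℝ) : Prop :=
  T.HasEigenvalue ν ∧ ∀ c : ℝ, T.HasEigenvalue c → ν ≤ c

/-- `λ(T) ≤ lam`, i.e. the second largest eigenvalue of `T` (with multiplicity)
is at most `lam` and the least eigenvalue is at least `-lam`. -/
def lamBd {V : Type*} [AddCommGroup V] [Module ℝ V]
    (T : Module.End ℝ V) (lam : ℝ) : Prop :=
  eigMultAboveLe T lam 1 ∧ ∀ c : ℝ, T.HasEigenvalue c → -lam ≤ c

namespace WGP

variable {P : Type} [Fintype P] [PartialOrder P] (W : WGP P)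

/-- The level set `P(i)`. -/
def lvl (i : ℤ) : Finset P := univ.filter (fun x => W.rk x = i)

/-- The weighted inner product on `C^i`. -/
def innerAt (i : ℤ) (f g : P → ℝ) : ℝ := ∑ x ∈ W.lvl i, W.m x * f x * g x

/-- The squared norm on `C^i`. -/
def normSqAt (i : ℤ) (f : P → ℝ) : ℝ := W.innerAt i f f

/-- The norm on `C^i`. -/
def normAt (i : ℤ) (f : P → ℝ) : ℝ := Real.sqrt (W.normSqAt i f)

/-- The matrix of transition probabilities : entry `(y, x)` is `p_{y→x}`,
which vanishes unless `x ⋖ y`.  This is also the matrix of the up operator. -/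
def upMat : Matrix P P ℝ := Matrix.of fun y x => W.p y x

/-- The matrix of the down operator. -/
def downMat : Matrix P P ℝ := Matrix.of fun x y => W.p y x * W.m y / W.m x

/-- The up operator `U`. -/
def Up (f : P → ℝ) : P → ℝ := W.upMat.mulVec f

/-- The down operator `D`. -/
def Down (f : P → ℝ) : P → ℝ := W.downMat.mulVec f

/-- `chSum x y = Σ_{c ∈ Ch(y→x)} p(c)`, the total `p`-weight of maximal chains
from `x` up to `y` (the entry of the corresponding power of the transition
matrix). -/
def chSum (x y : P) : ℝ := (W.upMat ^ (W.rk y - W.rk x).toNat) y x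

/-- The induced weight function of the link `P_x`. -/
def mL (x y : P) : ℝ := W.m y / W.m x * W.chSum x y

/-- The induced transition probabilities of the link `P_x` :
`pL x z y = (p_x)_{z → y}`. -/
def pL (x z y : P) : ℝ := W.p z y * W.chSum x y / W.chSum x z

/-- The level set `P_x(j)` of the link of `x`. -/
def linkLvl (x : P) (j : ℤ) : Finset P :=
  univ.filter (fun y => x ≤ y ∧ W.rk y = W.rk x + 1 + j)

/-- The inner product of the link `P_x` at link-level `j`. -/
def innerL (x : P) (j : ℤ) (f g : P → ℝ) : ℝ :=
  ∑ y ∈ W.linkLvl x j, W.mL x y * f y * g y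

/-- The matrix of the up operator of the link `P_x`. -/
def upMatL (x : P) : Matrix P P ℝ :=
  Matrix.of fun z y => if y ⋖ z ∧ x ≤ y then W.pL x z y else 0

/-- The matrix of the down operator of the link `P_x`. -/
def downMatL (x : P) : Matrix P P ℝ :=
  Matrix.of fun y z => if y ⋖ z then W.pL x z y * W.mL x z / W.mL x y else 0

/-- The up operator of the link `P_x`. -/
def UpL (x : P) (f : P → ℝ) : P → ℝ := (W.upMatL x).mulVec f

/-- The down operator of the link `P_x`. -/
def DownL (x : P) (f : P → ℝ) : P → ℝ := (W.downMatL x).mulVec f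

/-- The up-down walk `M^+_{x,0}` of the link `P_x`. -/
def MplusL (x : P) (f : P → ℝ) : P → ℝ := W.DownL x (W.UpL x f)

/-- The down-up walk `M^-_{x,0}` of the link `P_x`. -/
def MminusL (x : P) (f : P → ℝ) : P → ℝ := W.UpL x (W.DownL x f)

/-- The adjacency matrix. -/
def adjMat : Matrix P P ℝ := Matrix.of fun y x =>
  if x = y then 0 else
    ∑ z ∈ univ.filter (fun z => x ⋖ z ∧ y ⋖ z),
      W.m z * W.p z x * W.p z y / ((1 - W.p z y) * W.m y)

/-- The adjacency operator. -/
def Adj (f : P → ℝ) : P → ℝ := W.adjMat.mulVec f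

/-- The adjacency matrix of the link `P_x`. -/
def adjMatL (x : P) : Matrix P P ℝ := Matrix.of fun y w =>
  if w = y then 0 else
    ∑ z ∈ univ.filter (fun z => w ⋖ z ∧ y ⋖ z),
      W.mL x z * W.pL x z w * W.pL x z y / ((1 - W.pL x z y) * W.mL x y)

/-- The adjacency operator of the link `P_x`. -/
def AdjL (x : P) (f : P → ℝ) : P → ℝ := (W.adjMatL x).mulVec f

/-- The up-down walk `M^+_l` as an endomorphism of `C^l`. -/
def MplusEnd (l : ℤ) : Module.End ℝ ({x : P // W.rk x = l} → ℝ) :=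
  ((W.downMat * W.upMat).submatrix Subtype.val Subtype.val).mulVecLin

/-- The up-down walk `M^+_{x,0}` as an endomorphism of `C^0(P_x)`. -/
def MplusEndL (x : P) : Module.End ℝ ({y : P // x ⋖ y} → ℝ) :=
  ((W.downMatL x * W.upMatL x).submatrix Subtype.val Subtype.val).mulVecLin

/-- The adjacency operator `A_x` of the link `P_x` as an endomorphism of
`C^0(P_x)`. -/
def AdjEndL (x : P) : Module.End ℝ ({y : P // x ⋖ y} → ℝ) :=
  ((W.adjMatL x).submatrix Subtype.val Subtype.val).mulVecLin

/-- A standard weight scheme. -/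
def Standard : Prop :=
  ∀ y x : P, x ⋖ y → W.p y x = 1 / ((univ.filter (fun z => z ⋖ y)).card : ℝ)

/-- `P` is lower regular at level `i` with constant `N`. -/
def LowerRegAt (i : ℤ) (N : ℕ) : Prop :=
  ∀ y : P, W.rk y = i → (univ.filter (fun z => z ⋖ y)).card = N

/-- `P` is middle regular at level `i` with constant `N`. -/
def MiddleRegAt (i : ℤ) (N : ℕ) : Prop :=
  ∀ x z : P, W.rk x = i + 1 → W.rk z = i - 1 → z < x →
    (univ.filter (fun y => z ⋖ y ∧ y ⋖ x)).card = N

/-- `P` is `∨∧`-regular at level `i` with constant `N`. -/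
def WedgeRegAt (i : ℤ) (N : ℕ) : Prop :=
  ∀ y₁ y₂ : P, W.rk y₁ = i → W.rk y₂ = i → y₁ ≠ y₂ → (∃ z, y₁ ⋖ z ∧ y₂ ⋖ z) →
    (univ.filter (fun s => s ⋖ y₁ ∧ s ⋖ y₂)).card = N

/-- `P` is `⅄`-regular with constant `R`. -/
def WyeReg (R : ℕ) : Prop :=
  ∀ u y₁ y₂ : P, W.rk u = 2 → W.rk y₁ = 0 → W.rk y₂ = 0 → y₁ ≠ y₂ →
    y₁ < u → y₂ < u →
    (univ.filter (fun z => y₁ ⋖ z ∧ y₂ ⋖ z ∧ z ⋖ u)).card = R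

/-- Property UL.1 with constants `c`. -/
def UL1 (c : ℤ → ℝ) : Prop :=
  ∀ l : ℤ, 0 ≤ l → l < W.d → ∀ y : P, W.rk y = l → ∀ x : P, y ⋖ x →
    ∑ z ∈ univ.filter (fun z => z ⋖ y), W.p y z ^ 2 / W.chSum z x = c l

/-- Property UL.2 with constants `c`. -/
def UL2 (c : ℤ → ℝ) : Prop :=
  ∀ l : ℤ, 0 ≤ l → l < W.d → ∀ y₁ y₂ : P, W.rk y₁ = l → W.rk y₂ = l → y₁ ≠ y₂ →
    ∀ x : P, y₁ ⋖ x → y₂ ⋖ x →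
    ∑ z ∈ univ.filter (fun z => z ⋖ y₁ ∧ z ⋖ y₂),
      W.p y₁ z * W.p y₂ z / W.chSum z x = c l

/-- Property UL.3 with constants `c`. -/
def UL3 (c : ℤ → ℝ) : Prop :=
  ∀ l : ℤ, 0 ≤ l → l < W.d → ∀ y : P, W.rk y = l →
    ∑ x ∈ univ.filter (fun x => y ⋖ x), W.m x * W.p x y ^ 2 = c l * W.m y

/-- Property AL. -/
def AL : Prop :=
  ∀ l : ℤ, 0 ≤ l → l ≤ W.d - 1 → ∀ x y : P, W.rk x = l → W.rk y = l → x ≠ y →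
    ∑ z ∈ univ.filter (fun z => x ⋖ z ∧ y ⋖ z),
        W.m z * W.p z x * W.p z y / (1 - W.p z x)
    = ∑ z ∈ univ.filter (fun z => x ⋖ z ∧ y ⋖ z),
        W.m z * W.p z x * W.p z y *
          ∑ s ∈ univ.filter (fun s => s ⋖ x ∧ s ⋖ y),
            W.p x s * W.p y s / (W.chSum s z - W.p z x * W.p x s)

/-- Equation TL.1 with constant `c`. -/
def TL1 (c : ℝ) : Prop :=
  ∀ y : P, W.rk y = 0 →
    c * W.m y = ∑ z ∈ univ.filter (fun z => y ⋖ z), W.m z * W.p z y ^ 2 *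
      ∑ x ∈ univ.filter (fun x => x ⋖ z ∧ x ≠ y), W.p z x / (1 - W.p z x) ^ 2

/-- Equation TL.2 with constant `c`. -/
def TL2 (c : ℝ) : Prop :=
  ∀ y₁ y₂ : P, W.rk y₁ = 0 → W.rk y₂ = 0 → y₁ ≠ y₂ →
    c * ∑ z ∈ univ.filter (fun z => y₁ ⋖ z ∧ y₂ ⋖ z),
          W.m z * W.p z y₁ * W.p z y₂ / (1 - W.p z y₁)
    = ∑ z ∈ univ.filter (fun z => y₁ ⋖ z ∧ y₂ ⋖ z),
        W.m z * W.p z y₁ * W.p z y₂ *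
          ∑ x ∈ univ.filter (fun x => x ⋖ z ∧ x ≠ y₁ ∧ x ≠ y₂),
            W.p z x / (1 - W.p z x) ^ 2

/-- Equation TL.3 with constant `c`. -/
def TL3 (c : ℝ) : Prop :=
  ∀ y : P, W.rk y = 0 →
    c * W.m y =
      ∑ x ∈ univ.filter (fun x => W.rk x = 0 ∧ x ≠ y),
        ∑ z ∈ univ.filter (fun z => x ⋖ z ∧ y ⋖ z),
          ∑ w ∈ univ.filter (fun w => w ≠ z ∧ x ⋖ w ∧ y ⋖ w),
            ∑ u ∈ univ.filter (fun u => z ⋖ u ∧ w ⋖ u),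
              W.m u * W.p u z * W.p u w * W.p w y * W.p z y * W.p w x * W.p z x /
                (W.chSum x u * (1 - W.p u z * W.p z x / W.chSum x u) *
                  (1 - W.p w x) * (1 - W.p z x))

/-- Equation TL.4 with constant `c`. -/
def TL4 (c : ℝ) : Prop :=
  ∀ y₁ y₂ : P, W.rk y₁ = 0 → W.rk y₂ = 0 → y₁ ≠ y₂ →
    c * ∑ z ∈ univ.filter (fun z => y₁ ⋖ z ∧ y₂ ⋖ z),
          W.m z * W.p z y₁ * W.p z y₂ / (1 - W.p z y₁)
    = ∑ x ∈ univ.filter (fun x => W.rk x = 0 ∧ x ≠ y₁ ∧ x ≠ y₂),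
        ∑ z ∈ univ.filter (fun z => x ⋖ z ∧ y₂ ⋖ z),
          ∑ w ∈ univ.filter (fun w => w ≠ z ∧ x ⋖ w ∧ y₁ ⋖ w),
            ∑ u ∈ univ.filter (fun u => z ⋖ u ∧ w ⋖ u),
              W.m u * W.p u z * W.p u w * W.p w y₁ * W.p z y₂ * W.p w x * W.p z x /
                (W.chSum x u * (1 - W.p u z * W.p z x / W.chSum x u) *
                  (1 - W.p w x) * (1 - W.p z x))

/-- The induced function `f̂_x ∈ C^0(P_x)` of `f ∈ C^0`. -/
def hatF (x : P) (f : P → ℝ) : P → ℝ := fun z =>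
  (1 / (1 - W.p z x)) * ∑ y ∈ univ.filter (fun y => y ≠ x ∧ y ⋖ z), W.p z y * f y

/-- `P` is connected: the Markov chain `M^+_0` on `P(0)` is irreducible. -/
def Connected : Prop :=
  ∀ y z : P, W.rk y = 0 → W.rk z = 0 →
    ∃ j : ℕ, 0 < j ∧ ((W.downMat * W.upMat) ^ j) z y ≠ 0

/-- The link `P_x` is connected: the Markov chain `M^+_{x,0}` on `P_x(0)` is
irreducible. -/
def LinkConnected (x : P) : Prop :=
  ∀ y z : P, x ⋖ y → x ⋖ z →
    ∃ j : ℕ, 0 < j ∧ ((W.downMatL x * W.upMatL x) ^ j) z y ≠ 0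

/-- `c` is a nontrivial eigenvalue of the adjacency operator `A` of `P`,
i.e. one with an eigenvector orthogonal to the constants. -/
def IsNontrivEigAdj (c : ℝ) : Prop :=
  ∃ f : P → ℝ, (∃ y, W.rk y = 0 ∧ f y ≠ 0) ∧
    (∀ y, W.rk y = 0 → W.Adj f y = c * f y) ∧
    W.innerAt 0 f (fun _ => 1) = 0

/-- `c` is a nontrivial eigenvalue of the adjacency operator `A_x` of the
link `P_x`. -/
def IsNontrivEigAdjL (x : P) (c : ℝ) : Prop :=
  ∃ f : P → ℝ, (∃ y, x ⋖ y ∧ f y ≠ 0) ∧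
    (∀ y, x ⋖ y → W.AdjL x f y = c * f y) ∧
    W.innerL x 0 f (fun _ => 1) = 0

end WGP


theorem WGP.p_zero {P : Type} [Fintype P] [PartialOrder P] (W : WGP P) {y x : P}
    (h : ¬ x ⋖ y) : W.p y x = 0 :=
  le_antisymm (not_lt.1 (fun h' => h ((W.p_pos_iff y x).1 h'))) (W.p_nonneg y x)

theorem WGP.chSum_one {P : Type} [Fintype P] [PartialOrder P] (W : WGP P) {s y : P}
    (h : W.rk y = W.rk s + 1) : W.chSum s y = W.p y s := by
  have : (W.rk y - W.rk s).toNat = 1 := by rw [h]; simp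
  rw [WGP.chSum, this, pow_one]; rfl

theorem WGP.chSum_two_pos {P : Type} [Fintype P] [PartialOrder P] (W : WGP P) {s y z : P}
    (h : s ⋖ y) (h2 : y ⋖ z) : 0 < W.chSum s z := by
  have e1 := W.rk_covBy _ _ h
  have e2 := W.rk_covBy _ _ h2
  have : (W.rk z - W.rk s).toNat = 2 := by rw [e2, e1]; ring_nf; rfl
  rw [WGP.chSum, this, pow_two, Matrix.mul_apply]
  refine Finset.sum_pos' (fun i _ => mul_nonneg (W.p_nonneg _ _) (W.p_nonneg _ _))
    ⟨y, Finset.mem_univ _, mul_pos ((W.p_pos_iff _ _).2 h2) ((W.p_pos_iff _ _).2 h)⟩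

/-- the common summand -/
def WGP.T {P : Type} [Fintype P] [PartialOrder P] (W : WGP P) (s y w z : P) : ℝ :=
  W.m z * W.p z y * W.p z w * (W.p y s * W.p w s / (W.chSum s z - W.p z y * W.p y s))

theorem WGP.link_term {P : Type} [Fintype P] [PartialOrder P] (W : WGP P) {s y w z : P}
    (hy : s ⋖ y) (hyz : y ⋖ z) (hwz : w ⋖ z) :
    W.m s * W.mL s y *
      (W.mL s z * W.pL s z w * W.pL s z y / ((1 - W.pL s z y) * W.mL s y)) = W.T s y w z := by
  have e1 := W.rk_covBy _ _ hy
  have e2 := W.rk_covBy _ _ hyz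
  have e3 := W.rk_covBy _ _ hwz
  have hc := (W.chSum_two_pos hy hyz).ne'
  have hp : W.p y s ≠ 0 := ((W.p_pos_iff _ _).2 hy).ne'
  have hms := (W.m_pos s).ne'
  have hmy := (W.m_pos y).ne'
  have h1 : 1 - W.p z y * W.p y s / W.chSum s z
      = (W.chSum s z - W.p z y * W.p y s) / W.chSum s z := by field_simp
  simp only [WGP.T, WGP.mL, WGP.pL, W.chSum_one e1, W.chSum_one (show W.rk w = W.rk s + 1 by omega)]
  rw [h1]
  by_cases h0 : W.chSum s z - W.p z y * W.p y s = 0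
  · rw [h0]; simp
  · field_simp

theorem WGP.rhs_s {P : Type} [Fintype P] [PartialOrder P] (W : WGP P) (l : ℤ) (f : P → ℝ)
    (s : P) (hs : W.rk s = l - 1) :
    W.m s * W.innerL s 0 (W.AdjL s f) f
      = ∑ y ∈ W.lvl l, ∑ w, (if w = y then 0 else
          ∑ z ∈ univ.filter (fun z => w ⋖ z ∧ y ⋖ z), W.T s y w z) * f w * f y := by
  have hsub : W.linkLvl s 0 ⊆ W.lvl l := by
    intro y hy
    simp only [WGP.linkLvl, WGP.lvl, Finset.mem_filter, Finset.mem_univ, true_and] at hy ⊢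
    omega
  rw [WGP.innerL, Finset.mul_sum]
  rw [← Finset.sum_subset hsub]
  · refine Finset.sum_congr rfl fun y hy => ?_
    simp only [WGP.linkLvl, Finset.mem_filter, Finset.mem_univ, true_and] at hy
    simp only [WGP.AdjL, Matrix.mulVec, dotProduct, WGP.adjMatL, Matrix.of_apply]
    rw [Finset.mul_sum, Finset.sum_mul, Finset.mul_sum]
    refine Finset.sum_congr rfl fun w _ => ?_
    by_cases hwy : w = y
    · simp [hwy]
    rw [if_neg hwy, if_neg hwy]
    by_cases hsy : s ⋖ y
    · have : ∑ z ∈ univ.filter (fun z => w ⋖ z ∧ y ⋖ z), W.T s y w z =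
          W.m s * W.mL s y * ∑ z ∈ univ.filter (fun z => w ⋖ z ∧ y ⋖ z),
            W.mL s z * W.pL s z w * W.pL s z y / ((1 - W.pL s z y) * W.mL s y) := by
        rw [Finset.mul_sum]
        refine Finset.sum_congr rfl fun z hz => ?_
        simp only [Finset.mem_filter, Finset.mem_univ, true_and] at hz
        exact (W.link_term hsy hz.2 hz.1).symm
      rw [this]; ring
    · have h0 : W.mL s y = 0 := by
        rw [WGP.mL, W.chSum_one (by omega), W.p_zero hsy, mul_zero]
      rw [h0]
      simp [WGP.T, W.p_zero hsy]
  · intro y hy hy'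
    have hsy : ¬ s ⋖ y := by
      intro h
      apply hy'
      have := W.rk_covBy _ _ h
      simp only [WGP.linkLvl, Finset.mem_filter, Finset.mem_univ, true_and]
      exact ⟨h.le, by omega⟩
    simp [WGP.T, W.p_zero hsy]

/-- Garland-type localization of the adjacency operator under
Property AL. -/
theorem stmt10 {P : Type} [Fintype P] [PartialOrder P] (W : WGP P)
    (hstd : W.Standard)
    (hcov : ∀ y : P, 1 ≤ W.rk y → 2 ≤ (Finset.univ.filter (fun z => z ⋖ y)).card)
    (hAL : W.AL)
    (l : ℤ) (hl0 : 0 ≤ l) (hld : l ≤ W.d - 1) (f : P → ℝ) :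
    W.innerAt l (W.Adj f) f
      = ∑ s ∈ W.lvl (l - 1), W.m s * W.innerL s 0 (W.AdjL s f) f := by
  have hR : ∑ s ∈ W.lvl (l - 1), W.m s * W.innerL s 0 (W.AdjL s f) f
      = ∑ y ∈ W.lvl l, ∑ w, ∑ s ∈ W.lvl (l - 1), (if w = y then 0 else
          ∑ z ∈ univ.filter (fun z => w ⋖ z ∧ y ⋖ z), W.T s y w z) * f w * f y := by
    have h1 : ∀ s ∈ W.lvl (l - 1), W.m s * W.innerL s 0 (W.AdjL s f) f
      = ∑ y ∈ W.lvl l, ∑ w, (if w = y then 0 else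
          ∑ z ∈ univ.filter (fun z => w ⋖ z ∧ y ⋖ z), W.T s y w z) * f w * f y := by
      intro s hs
      exact W.rhs_s l f s (by simpa [WGP.lvl] using hs)
    rw [Finset.sum_congr rfl h1, Finset.sum_comm]
    refine Finset.sum_congr rfl fun y _ => ?_
    rw [Finset.sum_comm]
  rw [hR, WGP.innerAt]
  refine Finset.sum_congr rfl fun y hy => ?_
  have hyl : W.rk y = l := by simpa [WGP.lvl] using hy
  simp only [WGP.Adj, Matrix.mulVec, dotProduct, WGP.adjMat, Matrix.of_apply]
  rw [Finset.mul_sum, Finset.sum_mul]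
  refine Finset.sum_congr rfl fun w _ => ?_
  by_cases hwy : w = y
  · simp [hwy]
  simp only [if_neg hwy]
  rw [← Finset.sum_mul, ← Finset.sum_mul, ← mul_assoc]
  congr 2
  by_cases hwl : W.rk w = l
  · have hA := hAL l hl0 hld y w hyl hwl (Ne.symm hwy)
    have hf : univ.filter (fun z => w ⋖ z ∧ y ⋖ z) = univ.filter (fun z => y ⋖ z ∧ w ⋖ z) := by
      ext z; simp [and_comm]
    rw [hf, Finset.mul_sum]
    have hL : ∑ z ∈ univ.filter (fun z => y ⋖ z ∧ w ⋖ z),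
        W.m y * (W.m z * W.p z w * W.p z y / ((1 - W.p z y) * W.m y))
        = ∑ z ∈ univ.filter (fun z => y ⋖ z ∧ w ⋖ z),
          W.m z * W.p z y * W.p z w / (1 - W.p z y) := by
      refine Finset.sum_congr rfl fun z _ => ?_
      have hmy := (W.m_pos y).ne'
      rw [← mul_div_assoc, mul_comm (1 - W.p z y), mul_div_mul_left _ _ hmy]
      ring
    rw [hL, hA, Finset.sum_comm]
    refine Finset.sum_congr rfl fun z _ => ?_
    simp only [WGP.T]
    rw [← Finset.mul_sum]
    congr 1
    apply Finset.sum_subset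
    · intro s hs
      simp only [WGP.lvl, Finset.mem_filter, Finset.mem_univ, true_and] at hs ⊢
      have := W.rk_covBy _ _ hs.1
      omega
    · intro s _ hs
      simp only [Finset.mem_filter, Finset.mem_univ, true_and, not_and_or] at hs
      rcases hs with h | h <;> simp [W.p_zero h]
  · have hf : univ.filter (fun z => w ⋖ z ∧ y ⋖ z) = ∅ := by
      ext z
      simp only [Finset.mem_filter, Finset.mem_univ, true_and, Finset.notMem_empty, iff_false]
      rintro ⟨h1, h2⟩
      have := W.rk_covBy _ _ h1
      have := W.rk_covBy _ _ h2
      omega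
    rw [hf]; simp
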